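/- Let w be a Kreweras word of length 3n and let 1 ≤ i ≤ 3n with w_i ∈ {B, C}. Then either w_{σ_w(i)} = −w_i, or else w_{σ_w(i)} = A and w_{σ_w(σ_w(i))} = −w_i, where −B := C and −C := B. -/

import Mathlib

/-- The three letters of a Kreweras word. -/
inductive KLetter : Type
  | A | B | C
deriving DecidableEq, Repr

open KLetter

/-- `w` is a Kreweras word of length `3 * n`: it has `n` `A`'s, `n` `B`'s, `n` `C`'s,
and every prefix has at least as many `A`'s as `B`'s and at least as many `A`'s as `C`'s. -/
def IsKrewerasWord (n : ℕ) (w : List KLetter) : Prop :=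
  w.length = 3 * n ∧ w.count A = n ∧ w.count B = n ∧ w.count C = n ∧
  ∀ k : ℕ, (w.take k).count B ≤ (w.take k).count A ∧
           (w.take k).count C ≤ (w.take k).count A

/-- `kiota w` is the smallest index `ι ≥ 1` (1-indexed) such that the prefix of
length `ι` of `w` has equally many `A`'s as `B`'s, or equally many `A`'s as `C`'s
(and `0` if no such index exists). -/
def kiota (w : List KLetter) : ℕ :=
  (((List.range (w.length + 1)).filter fun k =>
      decide (1 ≤ k) &&
      (((w.take k).count A == (w.take k).count B) ||
       ((w.take k).count A == (w.take k).count C))).headD 0)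

/-- Promotion of a Kreweras word:
`pro w = (w₂, …, w_{ι-1}, A, w_{ι+1}, …, w_{3n}, w_ι)` where `ι = kiota w`. -/
def pro (w : List KLetter) : List KLetter :=
  ((w.drop 1).set (kiota w - 2) A) ++ [w.getD (kiota w - 1) A]

/-- The trip permutation `σ_w` of a Kreweras word of length `3 * n`, as a function on
1-indexed positions: `σ_w i` is the unique element of `{1, …, 3n}` congruent to
`kiota (pro^[i-1] w) + i - 1` modulo `3 * n`. -/
def ksigma (n : ℕ) (w : List KLetter) (i : ℕ) : ℕ :=
  (kiota (pro^[i - 1] w) + i - 2) % (3 * n) + 1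

/-- `keps w i` is the letter of `pro^[i-1] w` in (1-indexed) position `kiota (pro^[i-1] w)`. -/
def keps (w : List KLetter) (i : ℕ) : KLetter :=
  (pro^[i - 1] w).getD (kiota (pro^[i - 1] w) - 1) A

/-- The negation swapping `B` and `C` (and fixing `A`). -/
def negL : KLetter → KLetter
  | A => A
  | B => C
  | C => B

open Classical in
/-- The involution `τ_i` on Kreweras words of length `3 * n`: swap the letters in
(1-indexed) positions `i` and `i + 1` if the result is again a Kreweras word,
and otherwise do nothing. -/
noncomputable def tau (n i : ℕ) (w : List KLetter) : List KLetter :=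
  let w' := (w.set (i - 1) (w.getD i A)).set i (w.getD (i - 1) A)
  if IsKrewerasWord n w' then w' else w

/-- `tauDown n j = τ_j ∘ τ_{j-1} ∘ ⋯ ∘ τ_1`. -/
noncomputable def tauDown (n : ℕ) : ℕ → List KLetter → List KLetter
  | 0, w => w
  | j + 1, w => tau n (j + 1) (tauDown n j w)

/-- `evacAux n j = (tauDown n 1) ∘ (tauDown n 2) ∘ ⋯ ∘ (tauDown n j)`. -/
noncomputable def evacAux (n : ℕ) : ℕ → List KLetter → List KLetter
  | 0, w => w
  | j + 1, w => evacAux n j (tauDown n (j + 1) w)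

/-- Evacuation on Kreweras words of length `3 * n`:
`evac = (τ_1) ∘ (τ_2 ∘ τ_1) ∘ ⋯ ∘ (τ_{3n-1} ∘ ⋯ ∘ τ_2 ∘ τ_1)`. -/
noncomputable def evac (n : ℕ) (w : List KLetter) : List KLetter :=
  evacAux n (3 * n - 1) w

/-- `tauAsc n k c = τ_{k+c-1} ∘ ⋯ ∘ τ_{k+1} ∘ τ_k`. -/
noncomputable def tauAsc (n k : ℕ) : ℕ → List KLetter → List KLetter
  | 0, w => w
  | j + 1, w => tau n (k + j) (tauAsc n k j w)

/-- `evacStarAux n j = (tauAsc n 1 (3n-1)) ∘ (tauAsc n 2 (3n-2)) ∘ ⋯ ∘ (tauAsc n j (3n-j))`. -/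
noncomputable def evacStarAux (n : ℕ) : ℕ → List KLetter → List KLetter
  | 0, w => w
  | j + 1, w => evacStarAux n j (tauAsc n (j + 1) (3 * n - (j + 1)) w)

/-- Dual evacuation on Kreweras words of length `3 * n`:
`evac* = (τ_{3n-1} ∘ ⋯ ∘ τ_1) ∘ (τ_{3n-1} ∘ ⋯ ∘ τ_2) ∘ ⋯ ∘ (τ_{3n-1})`. -/
noncomputable def evacStar (n : ℕ) (w : List KLetter) : List KLetter :=
  evacStarAux n (3 * n - 1) w

/-- The three-element "V"-shaped poset: `a < b`, `a < c`, with `b`, `c` incomparable. -/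
inductive VP : Type
  | a | b | c
deriving DecidableEq

instance : PartialOrder VP where
  le x y := x = y ∨ x = VP.a
  le_refl x := Or.inl rfl
  le_trans x y z hxy hyz := by
    rcases hxy with rfl | rfl
    · exact hyz
    · exact Or.inr rfl
  le_antisymm x y hxy hyx := by
    rcases hxy with rfl | rfl
    · rfl
    · rcases hyx with rfl | rfl <;> rfl

/-- The labeling of elements of `V(n) = VP × Fin n` by letters. -/
def vlabel {n : ℕ} (p : VP × Fin n) : KLetter :=
  match p.1 with
  | VP.a => A
  | VP.b => B
  | VP.c => C

/-- `L` is a linear extension of `V(n) = VP × Fin n` (with the product order):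
a list of all elements of `V(n)`, each appearing once, such that `L_i ≤ L_j`
implies `i ≤ j`. -/
def IsLinearExtension (n : ℕ) (L : List (VP × Fin n)) : Prop :=
  L.Nodup ∧ (∀ p : VP × Fin n, p ∈ L) ∧
  ∀ i j : Fin L.length, L.get i ≤ L.get j → (i : ℕ) ≤ (j : ℕ)

/-- A connected Kreweras word: a Kreweras word of length `3 * n` having no proper
nonempty consecutive substring which is itself a Kreweras word. -/
def ConnectedKrewerasWord (n : ℕ) (w : List KLetter) : Prop :=
  IsKrewerasWord n w ∧
  ∀ (u : List KLetter) (m : ℕ), u <:+: w → u ≠ [] → u ≠ w → ¬ IsKrewerasWord m u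

/-- Abstract growth diagram of the iterated promotions: `X j m`, `Y j m` are the two heights
of row `j` after column `m`, `s j` is the column hit in row `j`, and `e j` says that the
letter hit is a `B`. -/
structure Gr (L : ℕ) (X Y : ℕ → ℕ → ℤ) (s : ℕ → ℕ) (e : ℕ → Prop) : Prop where
  x0 : ∀ j, X j j = 0
  y0 : ∀ j, Y j j = 0
  xL : ∀ j, X j (j + L) = 0
  yL : ∀ j, Y j (j + L) = 0
  xn : ∀ j m, j ≤ m → m ≤ j + L → 0 ≤ X j m
  yn : ∀ j m, j ≤ m → m ≤ j + L → 0 ≤ Y j m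
  slo : ∀ j, j + 1 < s j
  shi : ∀ j, s j < j + L
  pos : ∀ j m, j < m → m < s j → 1 ≤ X j m ∧ 1 ≤ Y j m
  pre : ∀ j m, j < m → m < s j → X (j+1) m = X j m - 1 ∧ Y (j+1) m = Y j m - 1
  hitB : ∀ j, e j → X j (s j) = 0 ∧ X j (s j - 1) = 1 ∧ Y j (s j - 1) = Y j (s j)
  hitC : ∀ j, ¬ e j → Y j (s j) = 0 ∧ Y j (s j - 1) = 1 ∧ X j (s j - 1) = X j (s j)
  postB : ∀ j m, e j → s j ≤ m → m ≤ j + L → X (j+1) m = X j m + 1 ∧ Y (j+1) m = Y j m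
  postC : ∀ j m, ¬ e j → s j ≤ m → m ≤ j + L → X (j+1) m = X j m ∧ Y (j+1) m = Y j m + 1

namespace Gr

variable {L : ℕ} {X Y : ℕ → ℕ → ℤ} {s : ℕ → ℕ} {e : ℕ → Prop}

theorem swap (g : Gr L X Y s e) : Gr L Y X s (fun j => ¬ e j) where
  x0 := g.y0
  y0 := g.x0
  xL := g.yL
  yL := g.xL
  xn := g.yn
  yn := g.xn
  slo := g.slo
  shi := g.shi
  pos := fun j m h1 h2 => (g.pos j m h1 h2).symm
  pre := fun j m h1 h2 => (g.pre j m h1 h2).symm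
  hitB := g.hitC
  hitC := fun j h => g.hitB j (not_not.mp h)
  postB := fun j m h h1 h2 => (g.postC j m h h1 h2).symm
  postC := fun j m h h1 h2 => (g.postB j m (not_not.mp h) h1 h2).symm

theorem shift (g : Gr L X Y s e) (c : ℕ) :
    Gr L (fun j m => X (j + c) (m + c)) (fun j m => Y (j + c) (m + c))
      (fun j => s (j + c) - c) (fun j => e (j + c)) where
  x0 := fun j => g.x0 _
  y0 := fun j => g.y0 _
  xL := fun j => by have := g.xL (j + c); rw [show j + L + c = j + c + L by omega]; exact this
  yL := fun j => by have := g.yL (j + c); rw [show j + L + c = j + c + L by omega]; exact this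
  xn := fun j m h1 h2 => g.xn _ _ (by omega) (by omega)
  yn := fun j m h1 h2 => g.yn _ _ (by omega) (by omega)
  slo := fun j => by have := g.slo (j + c); omega
  shi := fun j => by have := g.shi (j + c); have := g.slo (j + c); omega
  pos := fun j m h1 h2 => g.pos _ _ (by omega) (by omega)
  pre := fun j m h1 h2 => by
    have := g.pre (j + c) (m + c) (by omega) (by omega)
    rw [show j + 1 + c = j + c + 1 by omega]; exact this
  hitB := fun j h => by
    have := g.hitB (j + c) h
    have h2 := g.slo (j + c)
    rw [show s (j + c) - c + c = s (j + c) by omega,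
      show s (j + c) - c - 1 + c = s (j + c) - 1 by omega]
    exact this
  hitC := fun j h => by
    have := g.hitC (j + c) h
    have h2 := g.slo (j + c)
    rw [show s (j + c) - c + c = s (j + c) by omega,
      show s (j + c) - c - 1 + c = s (j + c) - 1 by omega]
    exact this
  postB := fun j m h h1 h2 => by
    have := g.postB (j + c) (m + c) h (by omega) (by omega)
    rw [show j + 1 + c = j + c + 1 by omega]; exact this
  postC := fun j m h h1 h2 => by
    have := g.postC (j + c) (m + c) h (by omega) (by omega)
    rw [show j + 1 + c = j + c + 1 by omega]; exact this

theorem stp (g : Gr L X Y s e) (j m : ℕ) (h1 : j < m) (h2 : m ≤ j + L) :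
    (m < s j ∧ X (j+1) m = X j m - 1 ∧ Y (j+1) m = Y j m - 1) ∨
    (s j ≤ m ∧ e j ∧ X (j+1) m = X j m + 1 ∧ Y (j+1) m = Y j m) ∨
    (s j ≤ m ∧ ¬ e j ∧ X (j+1) m = X j m ∧ Y (j+1) m = Y j m + 1) := by
  by_cases h : m < s j
  · exact Or.inl ⟨h, g.pre j m h1 h⟩
  · by_cases he : e j
    · exact Or.inr (Or.inl ⟨by omega, he, g.postB j m he (by omega) h2⟩)
    · exact Or.inr (Or.inr ⟨by omega, he, g.postC j m he (by omega) h2⟩)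

theorem monge_x (g : Gr L X Y s e) (j c m : ℕ) (h1 : j < c) (h2 : c ≤ m) (h3 : m ≤ j + L) :
    X j m - X j c ≤ X (j+1) m - X (j+1) c := by
  rcases g.stp j c h1 (by omega) with a | a | a <;> rcases g.stp j m (by omega) h3 with b | b | b <;>
    first | omega | exact absurd b.2.1 a.2.1 | exact absurd a.2.1 b.2.1

theorem monge_y (g : Gr L X Y s e) (j c m : ℕ) (h1 : j < c) (h2 : c ≤ m) (h3 : m ≤ j + L) :
    Y j m - Y j c ≤ Y (j+1) m - Y (j+1) c := g.swap.monge_x j c m h1 h2 h3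

/-- Auxiliary statement: alternation along trips. -/
theorem alt0 (g : Gr L X Y s e) (h0 : e 0) : ¬ e (s 0 - 1) ∧ s (s 0 - 1) ≤ L := by
  have hlo := g.slo 0
  have hhi := g.shi 0
  have key : ∀ j, 1 ≤ j → j ≤ s 0 - 1 →
      (∀ l, s 0 ≤ l → l ≤ L → X j (s 0 - 1) + 1 ≤ X j l) ∧
      Y j (s 0) = Y j (s 0 - 1) + 1 ∧
      ∃ m, s 0 ≤ m ∧ m ≤ L ∧ Y j m ≤ Y j (s 0 - 1) := by
    intro j hj
    induction j, hj using Nat.le_induction with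
    | base =>
      intro _
      have a := g.pre 0 (s 0 - 1) (by omega) (by omega)
      have b := g.hitB 0 h0
      have c := g.pos 0 (s 0 - 1) (by omega) (by omega)
      simp only [zero_add] at a
      refine ⟨?_, ?_, L, by omega, le_refl _, ?_⟩
      · intro l h1 h2
        have := g.postB 0 l h0 h1 (by omega)
        have := g.xn 0 l (by omega) (by omega)
        simp only [zero_add] at *
        omega
      · have := g.postB 0 (s 0) h0 (le_refl _) (by omega)
        simp only [zero_add] at *
        omega
      · have := g.postB 0 L h0 (by omega) (by omega)
        have := g.yL 0
        simp only [zero_add] at *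
        omega
    | succ j hj ih =>
      intro hj2
      obtain ⟨i1, i2, m, hm1, hm2, i3⟩ := ih (by omega)
      have hs : s j ≠ s 0 := by
        intro hs
        have p := g.pos j (s 0 - 1) (by omega) (by omega)
        by_cases he : e j
        · have := g.hitB j he
          rw [hs] at this
          have := i1 (s 0) (le_refl _) (by omega)
          omega
        · have := g.hitC j he
          rw [hs] at this
          omega
      refine ⟨?_, ?_, ?_⟩
      · intro l h1 h2
        have := i1 l h1 h2
        have := g.monge_x j (s 0 - 1) l (by omega) (by omega) (by omega)
        omega
      · rcases g.stp j (s 0 - 1) (by omega) (by omega) with a | a | a <;>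
          rcases g.stp j (s 0) (by omega) (by omega) with b | b | b <;>
          first | omega | exact absurd b.2.1 a.2.1 | exact absurd a.2.1 b.2.1
      · rcases g.stp j (s 0 - 1) (by omega) (by omega) with a | a | a
        · have pp := g.pos j (s 0 - 1) (by omega) (by omega)
          rcases g.stp j m (by omega) (by omega) with b | b | b
          · exact ⟨m, hm1, hm2, by omega⟩
          · exfalso
            have := (g.hitB j b.2.1).1
            have := i1 (s j) (by omega) (by omega)
            omega
          · have hc := g.hitC j b.2.1
            refine ⟨s j - 1, by omega, by omega, ?_⟩
            have := g.pre j (s j - 1) (by omega) (by omega)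
            omega
        · have b := g.postB j m a.2.1 (by omega) (by omega)
          exact ⟨m, hm1, hm2, by omega⟩
        · have b := g.postC j m a.2.1 (by omega) (by omega)
          exact ⟨m, hm1, hm2, by omega⟩
  obtain ⟨k1, k2, m, hm1, hm2, k3⟩ := key (s 0 - 1) (by omega) (by omega)
  rw [g.x0] at k1
  rw [g.y0] at k3
  have hle : s (s 0 - 1) ≤ L := by
    by_contra hcon
    have := g.pos (s 0 - 1) m (by omega) (by omega)
    omega
  refine ⟨fun he => ?_, hle⟩
  have := g.hitB _ he
  have := g.slo (s 0 - 1)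
  have := k1 (s (s 0 - 1)) (by omega) hle
  omega

theorem alt (g : Gr L X Y s e) (j : ℕ) :
    (e j ↔ ¬ e (s j - 1)) ∧ s (s j - 1) ≤ j + L := by
  have hs := g.slo j
  by_cases h : e j
  · have h2 := (g.shift j).alt0 (by simpa using h)
    simp only [zero_add] at h2
    rw [show s j - j - 1 + j = s j - 1 by omega] at h2
    exact ⟨⟨fun _ => h2.1, fun _ => h⟩, by omega⟩
  · have h2 := (g.swap.shift j).alt0 (by simpa using h)
    simp only [zero_add] at h2
    rw [show s j - j - 1 + j = s j - 1 by omega] at h2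
    exact ⟨⟨fun h' => absurd h' h, fun h' => absurd h' h2.1⟩, by omega⟩

/-- The invariants valid in rows `1, …, s 0 - 1`. -/
theorem phase1 (g : Gr L X Y s e) (h0 : e 0) : ∀ j, 1 ≤ j → j ≤ s 0 - 1 →
    (X j (L+1) = X j L - 1 ∧ Y j (L+1) = Y j L) ∧
    (∀ l, s 0 ≤ l → l ≤ L → X j (s 0 - 1) + 1 ≤ X j l) ∧
    (∀ l, s 0 - 1 ≤ l → l ≤ L → Y j L - (X j L - X j (s 0 - 1)) + 1 ≤ Y j l) ∧
    (∀ m, L + 1 ≤ m → m ≤ L + j → ∃ m', L + 1 ≤ m' ∧ m' ≤ m ∧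
      (X j m' - X j L + 1 ≤ Y j m - Y j L ∨ X j m' ≤ X j (s 0 - 1))) := by
  have hlo := g.slo 0
  have hhi := g.shi 0
  intro j hj
  induction j, hj using Nat.le_induction with
  | base =>
    intro _
    have a := g.pre 0 (s 0 - 1) (by omega) (by omega)
    have b := g.hitB 0 h0
    have c := g.postB 0 L h0 (by omega) (by omega)
    have d1 := g.xL 0
    have d2 := g.yL 0
    have d3 := g.xL 1
    have d4 := g.yL 1
    rw [show 1 + L = L + 1 by omega] at d3 d4
    simp only [zero_add] at a b c d1 d2
    refine ⟨by omega, ?_, ?_, ?_⟩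
    · intro l h1 h2
      have := g.postB 0 l h0 h1 (by omega)
      have := g.xn 0 l (by omega) (by omega)
      simp only [zero_add] at *
      omega
    · intro l h1 h2
      have := g.yn 1 l (by omega) (by omega)
      omega
    · intro m h1 h2
      obtain rfl : m = L + 1 := by omega
      exact ⟨L + 1, le_refl _, le_refl _, Or.inr (by omega)⟩
  | succ j hj ih =>
    intro hj2
    obtain ⟨⟨i0, i0'⟩, i1, i2, i3⟩ := ih (by omega)
    have hs : s j ≠ L + 1 := by
      intro hs
      have p := g.pos j (s 0 - 1) (by omega) (by omega)
      have q := i1 L (by omega) (le_refl _)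
      by_cases he : e j
      · have := g.hitB j he
        rw [hs] at this
        simp only [Nat.add_sub_cancel] at this
        omega
      · have := g.hitC j he
        rw [hs] at this
        simp only [Nat.add_sub_cancel] at this
        omega
    have sI := g.stp j (s 0 - 1) (by omega) (by omega)
    have sL := g.stp j L (by omega) (by omega)
    have sN := g.stp j (L+1) (by omega) (by omega)
    have iL := i1 L (by omega) (le_refl _)
    refine ⟨?_, ?_, ?_, ?_⟩
    · rcases sL with a | a | a <;> rcases sN with b | b | b <;>
        first | omega | exact absurd b.2.1 a.2.1 | exact absurd a.2.1 b.2.1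
    · intro l h1 h2
      have := i1 l h1 h2
      have := g.monge_x j (s 0 - 1) l (by omega) (by omega) (by omega)
      omega
    · intro l h1 h2
      have il := i2 l h1 h2
      rcases sL with a | a | a
      · have b := g.pre j l (by omega) (by omega)
        have c := g.pre j (s 0 - 1) (by omega) (by omega)
        omega
      · rcases sI with b | b | b
        · rcases g.stp j l (by omega) (by omega) with c | c | c
          · omega
          · omega
          · exact absurd a.2.1 c.2.1
        · have := g.postB j l a.2.1 (by omega) (by omega)
          omega
        · exact absurd a.2.1 b.2.1
      · rcases sI with b | b | b
        · rcases g.stp j l (by omega) (by omega) with c | c | c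
          · have := i2 (s j) (by omega) (by omega)
            have := g.hitC j a.2.1
            have := g.pos j l (by omega) (by omega)
            omega
          · exact absurd c.2.1 a.2.1
          · omega
        · exact absurd b.2.1 a.2.1
        · have := g.postC j l a.2.1 (by omega) (by omega)
          omega
    · intro m h1 h2
      by_cases hm : m = L + (j + 1)
      · refine ⟨m, h1, le_refl _, Or.inr ?_⟩
        have := g.xL (j+1)
        rw [show j + 1 + L = m by omega] at this
        have := g.xn (j+1) (s 0 - 1) (by omega) (by omega)
        omega
      obtain ⟨m', h3, h4, h5⟩ := i3 m h1 (by omega)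
      have nI := g.xn (j+1) (s 0 - 1) (by omega) (by omega)
      have nm := g.yn j m (by omega) (by omega)
      have nm' := g.xn j m' (by omega) (by omega)
      rcases g.stp j m' (by omega) (by omega) with a | a | a
      ·
        refine ⟨m', h3, h4, ?_⟩
        have b := g.pre j L (by omega) (by omega)
        have c := g.pre j (s 0 - 1) (by omega) (by omega)
        rcases g.stp j m (by omega) (by omega) with d | d | d <;> omega
      · have hB := g.hitB j a.2.1
        have d := g.postB j m a.2.1 (by omega) (by omega)
        rcases sL with c | c | c
        · refine ⟨s j - 1, by omega, by omega, Or.inr ?_⟩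
          have := g.pre j (s j - 1) (by omega) (by omega)
          omega
        · rcases sI with b | b | b
          · exfalso
            have := i1 (s j) (by omega) (by omega)
            have := g.xn j (s 0 - 1) (by omega) (by omega)
            omega
          · exact ⟨m', h3, h4, by omega⟩
          · exact absurd a.2.1 b.2.1
        · exact absurd a.2.1 c.2.1
      · have hC := g.hitC j a.2.1
        have d := g.postC j m a.2.1 (by omega) (by omega)
        rcases sL with c | c | c
        ·
          obtain ⟨q, q1, q2, q3⟩ := i3 (s j) (by omega) (by omega)
          have : ∃ q, L + 1 ≤ q ∧ q < s j ∧
              (X j q - X j L + 1 ≤ Y j (s j) - Y j L ∨ X j q ≤ X j (s 0 - 1)) := by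
            by_cases hq : q = s j
            · refine ⟨s j - 1, by omega, by omega, ?_⟩
              rw [hC.2.2, ← hq]; rw [hq] at q3 ⊢; exact q3
            · exact ⟨q, q1, by omega, q3⟩
          obtain ⟨q, q1, q2, q3⟩ := this
          refine ⟨q, q1, by omega, ?_⟩
          have := g.pre j q (by omega) (by omega)
          have := g.pre j (s 0 - 1) (by omega) (by omega)
          omega
        · exact absurd c.2.1 a.2.1
        · rcases sI with b | b | b
          · refine ⟨m', h3, h4, ?_⟩
            have := i2 (s j) (by omega) (by omega)
            omega
          · exact absurd b.2.1 a.2.1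
          · exact ⟨m', h3, h4, by omega⟩

theorem phase2 (g : Gr L X Y s e) (h0 : e 0) : ∀ j, s 0 - 1 ≤ j → j ≤ L →
    ((X j (L+1) = X j L - 1 ∧ Y j (L+1) = Y j L) ∧
      (∀ m, L + 1 ≤ m → m ≤ L + s 0 - 1 → ∃ m', L + 1 ≤ m' ∧ m' ≤ m ∧
        X j m' - X j L + 1 ≤ Y j m - Y j L)) ∨
    (∀ m, L + 1 ≤ m → m ≤ L + s 0 - 1 → X j L + 1 ≤ X j m ∧ Y j L + 1 ≤ Y j m) := by
  have hlo := g.slo 0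
  have hhi := g.shi 0
  intro j hj
  induction j, hj using Nat.le_induction with
  | base =>
    intro _
    obtain ⟨i0, i1, i2, i3⟩ := g.phase1 h0 (s 0 - 1) (by omega) (le_refl _)
    left
    refine ⟨i0, ?_⟩
    intro m h1 h2
    obtain ⟨m', h3, h4, h5⟩ := i3 m h1 (by omega)
    refine ⟨m', h3, h4, ?_⟩
    have := i2 (s 0 - 1) (le_refl _) (by omega)
    have := g.yn (s 0 - 1) m (by omega) (by omega)
    have := g.x0 (s 0 - 1)
    have := g.y0 (s 0 - 1)
    omega
  | succ j hj ih =>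
    intro hj2
    have sL := g.stp j L (by omega) (by omega)
    rcases ih (by omega) with ⟨⟨i0, i0'⟩, i3⟩ | i
    · by_cases hs : s j = L + 1
      · right
        have he : e j := by
          by_contra he
          have := g.hitC j he
          rw [hs] at this
          simp only [Nat.add_sub_cancel] at this
          omega
        have hB := g.hitB j he
        rw [hs] at hB
        simp only [Nat.add_sub_cancel] at hB
        intro m h1 h2
        obtain ⟨m', h3, h4, h5⟩ := i3 m h1 h2
        have := g.xn j m' (by omega) (by omega)
        have := g.xn j m (by omega) (by omega)
        have := g.postB j m he (by omega) (by omega)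
        have := g.pre j L (by omega) (by omega)
        omega
      · left
        have sN := g.stp j (L+1) (by omega) (by omega)
        refine ⟨?_, ?_⟩
        · rcases sL with a | a | a <;> rcases sN with b | b | b <;>
            first | omega | exact absurd b.2.1 a.2.1 | exact absurd a.2.1 b.2.1
        intro m h1 h2
        obtain ⟨m', h3, h4, h5⟩ := i3 m h1 h2
        have nm := g.yn j m (by omega) (by omega)
        have nm' := g.xn j m' (by omega) (by omega)
        rcases g.stp j m' (by omega) (by omega) with a | a | a
        · refine ⟨m', h3, h4, ?_⟩
          have b := g.pre j L (by omega) (by omega)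
          rcases g.stp j m (by omega) (by omega) with d | d | d <;> omega
        · have hB := g.hitB j a.2.1
          have d := g.postB j m a.2.1 (by omega) (by omega)
          rcases sL with c | c | c
          · refine ⟨s j - 1, by omega, by omega, ?_⟩
            have := g.pre j (s j - 1) (by omega) (by omega)
            omega
          · exact ⟨m', h3, h4, by omega⟩
          · exact absurd a.2.1 c.2.1
        · have d := g.postC j m a.2.1 (by omega) (by omega)
          refine ⟨m', h3, h4, ?_⟩
          rcases sL with c | c | c <;> omega
    · right
      intro m h1 h2
      have := i m h1 h2
      have := g.monge_x j L m (by omega) (by omega) (by omega)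
      have := g.monge_y j L m (by omega) (by omega) (by omega)
      omega

theorem ge0 (g : Gr L X Y s e) (h0 : e 0) : s 0 + L ≤ s L := by
  have hlo := g.slo 0
  have hhi := g.shi 0
  have hl := g.slo L
  have x0 := g.x0 L
  have y0 := g.y0 L
  rcases g.phase2 h0 L (by omega) (le_refl _) with ⟨⟨i0, _⟩, _⟩ | i
  · have := g.xn L (L+1) (by omega) (by omega)
    omega
  · by_contra hcon
    have := i (s L) (by omega) (by omega)
    by_cases he : e L
    · have := g.hitB L he
      omega
    · have := g.hitC L he
      omega

theorem ge (g : Gr L X Y s e) : s 0 + L ≤ s L := by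
  by_cases h : e 0
  · exact g.ge0 h
  · exact g.swap.ge0 h

end Gr

/-- Step of the first height. -/
def dx : KLetter → ℤ
  | A => 1
  | B => -1
  | C => 0

/-- Step of the second height. -/
def dy : KLetter → ℤ
  | A => 1
  | B => 0
  | C => -1

/-- Height function. -/
def ht (f : KLetter → ℤ) (w : List KLetter) (k : ℕ) : ℤ :=
  ∑ t ∈ Finset.range k, f (w.getD t A)

theorem ht_succ (f : KLetter → ℤ) (w : List KLetter) (k : ℕ) :
    ht f w (k+1) = ht f w k + f (w.getD k A) := Finset.sum_range_succ _ _

theorem ht_zero (f : KLetter → ℤ) (w : List KLetter) : ht f w 0 = 0 := rfl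

theorem ht_counts (w : List KLetter) (k : ℕ) (hk : k ≤ w.length) :
    ht dx w k = ((w.take k).count A : ℤ) - (w.take k).count B ∧
    ht dy w k = ((w.take k).count A : ℤ) - (w.take k).count C ∧
    (w.take k).count A + (w.take k).count B + (w.take k).count C = k := by
  induction k with
  | zero => simp [ht_zero]
  | succ k ih =>
    obtain ⟨h1, h2, h3⟩ := ih (by omega)
    have hlt : k < w.length := by omega
    rw [ht_succ, ht_succ, List.take_add_one, List.getElem?_eq_getElem hlt, List.getD_eq_getElem _ _ hlt]
    simp only [Option.toList_some, List.count_append]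
    rw [h1, h2]
    cases w[k] <;> simp [dx, dy] <;> omega

/-- Kreweras words in terms of heights. -/
structure KW (n : ℕ) (w : List KLetter) : Prop where
  len : w.length = 3 * n
  ex : ht dx w (3 * n) = 0
  ey : ht dy w (3 * n) = 0
  nx : ∀ k, k ≤ 3 * n → 0 ≤ ht dx w k
  ny : ∀ k, k ≤ 3 * n → 0 ≤ ht dy w k

theorem kw_iff (n : ℕ) (w : List KLetter) : IsKrewerasWord n w ↔ KW n w := by
  constructor
  · rintro ⟨h1, h2, h3, h4, h5⟩
    have key := fun k hk => ht_counts w k hk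
    have hl : w.take (3 * n) = w := List.take_of_length_le (by omega)
    have kl := key (3 * n) (by omega)
    rw [hl] at kl
    refine ⟨h1, by omega, by omega, ?_, ?_⟩
    · intro k hk
      have := key k (by omega)
      have := h5 k
      omega
    · intro k hk
      have := key k (by omega)
      have := h5 k
      omega
  · intro h
    have h1 := h.len
    have key := fun k hk => ht_counts w k hk
    have hl : w.take (3 * n) = w := List.take_of_length_le (by omega)
    have kl := key (3 * n) (by omega)
    rw [hl] at kl
    have := h.ex
    have := h.ey
    refine ⟨h1, by omega, by omega, by omega, ?_⟩
    intro k
    by_cases hk : k ≤ 3 * n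
    · have := key k (by omega)
      have := h.nx k hk
      have := h.ny k hk
      omega
    · rw [List.take_of_length_le (by omega)]
      omega

theorem kiota_spec {n : ℕ} {w : List KLetter} (h : KW n w) (hn : 1 ≤ n) :
    1 ≤ kiota w ∧ kiota w ≤ 3 * n ∧ (ht dx w (kiota w) = 0 ∨ ht dy w (kiota w) = 0) ∧
    ∀ k, 1 ≤ k → k < kiota w → 1 ≤ ht dx w k ∧ 1 ≤ ht dy w k := by
  have h1 := h.len
  set p : ℕ → Bool := fun k => decide (1 ≤ k) &&
      (((w.take k).count A == (w.take k).count B) ||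
       ((w.take k).count A == (w.take k).count C)) with hp
  have hpk : ∀ k, k ≤ 3 * n → (p k = true ↔ 1 ≤ k ∧ (ht dx w k = 0 ∨ ht dy w k = 0)) := by
    intro k hk
    have := ht_counts w k (by omega)
    simp only [hp, Bool.and_eq_true, decide_eq_true_eq, Bool.or_eq_true, beq_iff_eq]
    omega
  have hk : kiota w = (((List.range (w.length + 1)).find? p).getD 0) := by
    unfold kiota
    rw [← hp, List.headD_eq_head?_getD, List.head?_filter]
  cases hf : (List.range (w.length + 1)).find? p with
  | none =>
    exfalso
    rw [List.find?_eq_none] at hf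
    exact hf (3 * n) (by simp; omega) ((hpk _ (le_refl _)).2 ⟨by omega, Or.inl h.ex⟩)
  | some i =>
    rw [hf] at hk
    simp only [Option.getD_some] at hk
    rw [List.find?_range_eq_some] at hf
    obtain ⟨a, b, c⟩ := hf
    have b' : i < w.length + 1 := by simpa using b
    have := (hpk i (by omega)).1 a
    rw [hk]
    refine ⟨this.1, by omega, this.2, ?_⟩
    intro k k1 k2
    have hc := c k k2
    have q := hpk k (by omega)
    have q2 : ¬ p k = true := by simpa using hc
    have := h.nx k (by omega)
    have := h.ny k (by omega)
    rw [q] at q2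
    omega

theorem iota_facts {n : ℕ} {w : List KLetter} (h : KW n w) (hn : 1 ≤ n) :
    2 ≤ kiota w ∧ kiota w < 3 * n ∧ w.getD 0 A = A ∧
    (∀ k, 1 ≤ k → k < kiota w → 1 ≤ ht dx w k ∧ 1 ≤ ht dy w k) ∧
    ((w.getD (kiota w - 1) A = B ∧ ht dx w (kiota w) = 0 ∧ ht dx w (kiota w - 1) = 1 ∧
        ht dy w (kiota w - 1) = ht dy w (kiota w)) ∨
     (w.getD (kiota w - 1) A = C ∧ ht dy w (kiota w) = 0 ∧ ht dy w (kiota w - 1) = 1 ∧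
        ht dx w (kiota w - 1) = ht dx w (kiota w))) := by
  obtain ⟨a, b, c, d⟩ := kiota_spec h hn
  have hA : w.getD 0 A = A := by
    have e1 := h.nx 1 (by omega)
    have e2 := h.ny 1 (by omega)
    rw [ht_succ, ht_zero] at e1 e2
    cases hc : w.getD 0 A <;> rw [hc] at e1 e2 <;> simp [dx, dy] at e1 e2
  have h2 : 2 ≤ kiota w := by
    by_contra hcon
    have : kiota w = 1 := by omega
    rw [this, ht_succ, ht_succ, ht_zero, ht_zero, hA] at c
    simp [dx, dy] at c
  obtain ⟨k, hk⟩ : ∃ k, kiota w = k + 1 := ⟨kiota w - 1, by omega⟩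
  have dk := d k (by omega) (by omega)
  have sx := ht_succ dx w k
  have sy := ht_succ dy w k
  have main : ((w.getD (kiota w - 1) A = B ∧ ht dx w (kiota w) = 0 ∧ ht dx w (kiota w - 1) = 1 ∧
        ht dy w (kiota w - 1) = ht dy w (kiota w)) ∨
     (w.getD (kiota w - 1) A = C ∧ ht dy w (kiota w) = 0 ∧ ht dy w (kiota w - 1) = 1 ∧
        ht dx w (kiota w - 1) = ht dx w (kiota w))) := by
    rw [hk] at c ⊢
    simp only [Nat.add_sub_cancel]
    cases hc : w.getD k A <;> rw [hc] at sx sy <;> simp only [dx, dy] at sx sy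
    · omega
    · left; exact ⟨rfl, by omega, by omega, by omega⟩
    · right; exact ⟨rfl, by omega, by omega, by omega⟩
  refine ⟨h2, ?_, hA, d, main⟩
  by_contra hcon
  have h3 : kiota w = 3 * n := by omega
  have dd := d (kiota w - 1) (by omega) (by omega)
  have := h.ex
  have := h.ey
  rw [h3] at main dd
  omega

theorem pro_length {n : ℕ} {w : List KLetter} (h : w.length = 3 * n) (hn : 1 ≤ n) :
    (pro w).length = 3 * n := by
  simp [pro]; omega

theorem pro_getD {n : ℕ} {w : List KLetter} (h : w.length = 3 * n) (hn : 1 ≤ n) (t : ℕ)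
    (ht : t < 3 * n) :
    (pro w).getD t A = if t = 3 * n - 1 then w.getD (kiota w - 1) A
      else if t = kiota w - 2 then A else w.getD (t+1) A := by
  unfold pro
  split_ifs with h1 h2
  · rw [List.getD_append_right _ _ _ _ (by simp; omega)]
    have : t - ((w.drop 1).set (kiota w - 2) A).length = 0 := by simp; omega
    rw [this]; rfl
  · rw [List.getD_append _ _ _ _ (by simp; omega)]
    rw [List.getD_eq_getElem _ _ (by simp; omega)]
    simp [h2]
  · rw [List.getD_append _ _ _ _ (by simp; omega)]
    rw [List.getD_eq_getElem _ _ (by simp; omega), List.getD_eq_getElem _ _ (by omega),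
      List.getElem_set_ne (by omega)]
    simp

theorem ht_pro (f : KLetter → ℤ) {n : ℕ} {w : List KLetter} (h : KW n w) (hn : 1 ≤ n) (k : ℕ)
    (hk : k + 1 ≤ 3 * n) :
    ht f (pro w) k = ht f w (k+1) - f A +
      (if kiota w - 1 ≤ k then f A - f (w.getD (kiota w - 1) A) else 0) := by
  obtain ⟨h2, h3, hA, _⟩ := iota_facts h hn
  induction k with
  | zero =>
    rw [if_neg (by omega), ht_succ, ht_zero, ht_zero, hA]; ring
  | succ k ih =>
    rw [ht_succ, ih (by omega), pro_getD h.len hn k (by omega),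
      if_neg (show ¬ k = 3 * n - 1 by omega), ht_succ f w (k+1)]
    by_cases hc : k = kiota w - 2
    · rw [if_neg (by omega), if_pos hc, if_pos (by omega),
        show k + 1 = kiota w - 1 by omega]
      ring
    · rw [if_neg hc]
      by_cases hd : kiota w - 1 ≤ k
      · rw [if_pos hd, if_pos (by omega)]; ring
      · rw [if_neg hd, if_neg (by omega)]; ring

theorem ht_pro_last (f : KLetter → ℤ) {n : ℕ} {w : List KLetter} (h : KW n w) (hn : 1 ≤ n) :
    ht f (pro w) (3 * n) = ht f w (3 * n) := by
  obtain ⟨h2, h3, hA, _⟩ := iota_facts h hn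
  obtain ⟨k, hk⟩ : ∃ k, 3 * n = k + 1 := ⟨3 * n - 1, by omega⟩
  rw [hk, ht_succ, pro_getD h.len hn k (by omega), if_pos (by omega),
    ht_pro f h hn k (by omega), if_pos (by omega)]
  ring

theorem pro_kw {n : ℕ} {w : List KLetter} (h : KW n w) (hn : 1 ≤ n) : KW n (pro w) := by
  obtain ⟨h2, h3, hA, hp, hh⟩ := iota_facts h hn
  have px := h.nx
  have py := h.ny
  refine ⟨pro_length h.len hn, by rw [ht_pro_last dx h hn, h.ex],
    by rw [ht_pro_last dy h hn, h.ey], ?_, ?_⟩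
  · intro k hk
    by_cases hl : k = 3 * n
    · rw [hl, ht_pro_last dx h hn, h.ex]
    rw [ht_pro dx h hn k (by omega)]
    have := px (k+1) (by omega)
    split_ifs with hc
    · rcases hh with hh | hh <;> rw [hh.1] <;> simp only [dx] <;> omega
    · have := hp (k+1) (by omega) (by omega)
      simp only [dx]; omega
  · intro k hk
    by_cases hl : k = 3 * n
    · rw [hl, ht_pro_last dy h hn, h.ey]
    rw [ht_pro dy h hn k (by omega)]
    have := py (k+1) (by omega)
    split_ifs with hc
    · rcases hh with hh | hh <;> rw [hh.1] <;> simp only [dy] <;> omega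
    · have := hp (k+1) (by omega) (by omega)
      simp only [dy]; omega

theorem iter_kw {n : ℕ} {w : List KLetter} (h : KW n w) (hn : 1 ≤ n) (j : ℕ) :
    KW n (pro^[j] w) := by
  induction j with
  | zero => exact h
  | succ j ih => rw [Function.iterate_succ_apply']; exact pro_kw ih hn

theorem pro_inj {n : ℕ} {v w : List KLetter} (hv : KW n v) (hw : KW n w) (hn : 1 ≤ n)
    (hle : kiota v ≤ kiota w) (h : pro v = pro w) : v = w := by
  obtain ⟨v2, v3, vA, vp, vv⟩ := iota_facts hv hn
  obtain ⟨w2, w3, wA, wp, ww⟩ := iota_facts hw hn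
  have last : v.getD (kiota v - 1) A = w.getD (kiota w - 1) A := by
    have := congrArg (fun l => l.getD (3 * n - 1) A) h
    rwa [pro_getD hv.len hn _ (by omega), pro_getD hw.len hn _ (by omega), if_pos rfl,
      if_pos rfl] at this
  have hi : kiota v = kiota w := by
    by_contra hcon
    have hx : ∀ f, ht f (pro v) (kiota w - 2) = ht f (pro w) (kiota w - 2) := by
      intro f; rw [h]
    have hx1 := hx dx
    have hx2 := hx dy
    rw [ht_pro _ hv hn _ (by omega), ht_pro _ hw hn _ (by omega), if_pos (by omega),
      if_neg (by omega), show kiota w - 2 + 1 = kiota w - 1 by omega] at hx1 hx2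
    have n1 := hv.nx (kiota w - 1) (by omega)
    have n2 := hv.ny (kiota w - 1) (by omega)
    rcases vv with vv | vv <;> rcases ww with ww | ww
    · rw [vv.1] at hx1; simp only [dx] at hx1; omega
    · rw [vv.1, ww.1] at last; cases last
    · rw [vv.1, ww.1] at last; cases last
    · rw [vv.1] at hx2; simp only [dy] at hx2; omega
  apply List.ext_getElem (by rw [hv.len, hw.len])
  intro t t1 t2
  rw [← List.getD_eq_getElem v A t1, ← List.getD_eq_getElem w A t2]
  have hl := hv.len
  cases t with
  | zero => rw [vA, wA]
  | succ t =>
    by_cases ht : t = kiota v - 2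
    · rw [show t + 1 = kiota v - 1 by omega, last, hi]
    · have := congrArg (fun l => l.getD t A) h
      rwa [pro_getD hv.len hn _ (by omega), pro_getD hw.len hn _ (by omega), if_neg (by omega),
        if_neg (by omega), if_neg (by omega), if_neg (by omega)] at this

theorem gr_of_kw {n : ℕ} {w : List KLetter} (h : KW n w) (hn : 1 ≤ n) :
    Gr (3 * n) (fun j m => ht dx (pro^[j] w) (m - j)) (fun j m => ht dy (pro^[j] w) (m - j))
      (fun j => j + kiota (pro^[j] w))
      (fun j => (pro^[j] w).getD (kiota (pro^[j] w) - 1) A = B) := by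
  have hk := iter_kw h hn
  have hi := fun j => iota_facts (hk j) hn
  have hC : ∀ j, ¬ (pro^[j] w).getD (kiota (pro^[j] w) - 1) A = B →
      (pro^[j] w).getD (kiota (pro^[j] w) - 1) A = C := by
    intro j hj
    rcases (hi j).2.2.2.2 with a | a
    · exact absurd a.1 hj
    · exact a.1
  have hpr : ∀ f j m, j < m → m ≤ j + 3 * n → ht f (pro^[j+1] w) (m - (j+1)) =
      ht f (pro^[j] w) (m - j) - f A + (if j + kiota (pro^[j] w) ≤ m then
        f A - f ((pro^[j] w).getD (kiota (pro^[j] w) - 1) A) else 0) := by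
    intro f j m h1 h2
    have h3 := (hi j).1
    rw [Function.iterate_succ_apply', ht_pro f (hk j) hn _ (by omega),
      show m - (j+1) + 1 = m - j by omega]
    congr 1
    by_cases hc : j + kiota (pro^[j] w) ≤ m
    · rw [if_pos hc, if_pos (by omega)]
    · rw [if_neg hc, if_neg (by omega)]
  constructor
  · intro j; simp [ht_zero]
  · intro j; simp [ht_zero]
  · intro j; simpa using (hk j).ex
  · intro j; simpa using (hk j).ey
  · intro j m h1 h2; exact (hk j).nx _ (by omega)
  · intro j m h1 h2; exact (hk j).ny _ (by omega)
  · intro j; have := (hi j).1; omega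
  · intro j; have := (hi j).2.1; omega
  · intro j m h1 h2; exact (hi j).2.2.2.1 _ (by omega) (by omega)
  · intro j m h1 h2
    have := (hi j).2.1
    rw [hpr dx j m h1 (by omega), hpr dy j m h1 (by omega), if_neg (by omega), if_neg (by omega)]
    simp [dx, dy]
  · intro j hj
    rcases (hi j).2.2.2.2 with a | a
    · rw [Nat.add_sub_cancel_left, show j + kiota (pro^[j] w) - 1 - j = kiota (pro^[j] w) - 1 by omega]
      exact a.2
    · rw [a.1] at hj; cases hj
  · intro j hj
    rcases (hi j).2.2.2.2 with a | a
    · exact absurd a.1 hj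
    · rw [Nat.add_sub_cancel_left, show j + kiota (pro^[j] w) - 1 - j = kiota (pro^[j] w) - 1 by omega]
      exact a.2
  · intro j m hj h1 h2
    have := (hi j).1
    rw [hpr dx j m (by omega) h2, hpr dy j m (by omega) h2, if_pos h1, if_pos h1, hj]
    constructor <;> simp only [dx, dy] <;> ring
  · intro j m hj h1 h2
    have := (hi j).1
    rw [hpr dx j m (by omega) h2, hpr dy j m (by omega) h2, if_pos h1, if_pos h1, hC j hj]
    constructor <;> simp only [dx, dy] <;> ring

instance instFiniteKLetter : Finite KLetter :=
  Finite.of_surjective (fun i : Fin 3 => if i = 0 then A else if i = 1 then B else C) (by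
    intro b
    cases b
    · exact ⟨0, rfl⟩
    · exact ⟨1, rfl⟩
    · exact ⟨2, rfl⟩)

/-- `3n` promotions preserve `kiota`. -/
theorem kiota_period {n : ℕ} {w : List KLetter} (h : KW n w) (hn : 1 ≤ n) :
    kiota (pro^[3 * n] w) = kiota w := by
  have hfin : Finite {v : List KLetter // KW n v} := by
    have h1 : {v : List KLetter | v.length = 3 * n}.Finite := List.finite_length_eq KLetter (3 * n)
    exact (h1.subset (fun v (hv : KW n v) => hv.len) : {v | KW n v}.Finite).to_subtype
  have := Fintype.ofFinite {v : List KLetter // KW n v}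
  let F : {v : List KLetter // KW n v} → {v : List KLetter // KW n v} :=
    fun v => ⟨pro v.1, pro_kw v.2 hn⟩
  have hF : Function.Injective F := by
    intro a b hab
    have h1 : pro a.1 = pro b.1 := congrArg Subtype.val hab
    apply Subtype.ext
    rcases le_total (kiota a.1) (kiota b.1) with hle | hle
    · exact pro_inj a.2 b.2 hn hle h1
    · exact (pro_inj b.2 a.2 hn hle h1.symm).symm
  have hG := hF.iterate (3 * n)
  have hbij : Function.Bijective F^[3 * n] := Finite.injective_iff_bijective.mp hG
  have hval : ∀ j v, (F^[j] v).1 = pro^[j] v.1 := by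
    intro j
    induction j with
    | zero => intro v; rfl
    | succ j ih => intro v; rw [Function.iterate_succ_apply, ih, Function.iterate_succ_apply]
  have hle : ∀ v ∈ (Finset.univ : Finset {v : List KLetter // KW n v}),
      kiota v.1 ≤ kiota (F^[3 * n] v).1 := by
    intro v _
    have := (gr_of_kw v.2 hn).ge
    simp only [Function.iterate_zero, id] at this
    rw [hval]; omega
  have hsum : ∑ v : {v : List KLetter // KW n v}, kiota v.1 =
      ∑ v : {v : List KLetter // KW n v}, kiota (F^[3 * n] v).1 :=
    (hbij.sum_comp (fun v => kiota v.1)).symm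
  have := (Finset.sum_eq_sum_iff_of_le hle).1 hsum ⟨w, h⟩ (Finset.mem_univ _)
  rw [hval] at this
  exact this.symm

/-- Letter of row `j` in column `m`. -/
def colL (w : List KLetter) (j m : ℕ) : KLetter := (pro^[j] w).getD (m - j - 1) A

section Col

variable {n : ℕ} {w : List KLetter}

theorem col_step (h : KW n w) (hn : 1 ≤ n) (j m : ℕ) (h1 : j + 1 < m) (h2 : m ≤ j + 3 * n) :
    colL w (j+1) m = if m = j + kiota (pro^[j] w) then A else colL w j m := by
  have hk := iter_kw h hn j
  have hi := iota_facts hk hn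
  unfold colL
  rw [Function.iterate_succ_apply', pro_getD hk.len hn _ (by omega), if_neg (by omega)]
  by_cases hc : m = j + kiota (pro^[j] w)
  · rw [if_pos hc, if_pos (by omega)]
  · rw [if_neg hc, if_neg (by omega), show m - (j+1) - 1 + 1 = m - j - 1 by omega]

theorem col_last (h : KW n w) (hn : 1 ≤ n) (j : ℕ) :
    colL w (j+1) (j + 1 + 3 * n) = colL w j (j + kiota (pro^[j] w)) := by
  have hk := iter_kw h hn j
  unfold colL
  rw [Function.iterate_succ_apply', pro_getD hk.len hn _ (by omega), if_pos (by omega),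
    Nat.add_sub_cancel_left]

theorem col_first (h : KW n w) (hn : 1 ≤ n) (j : ℕ) : colL w j (j+1) = A := by
  have hk := iter_kw h hn j
  have hi := iota_facts hk hn
  unfold colL
  rw [show j + 1 - j - 1 = 0 by omega]
  exact hi.2.2.1

theorem col_hit (h : KW n w) (hn : 1 ≤ n) (j : ℕ) :
    colL w j (j + kiota (pro^[j] w)) ≠ A := by
  have hk := iter_kw h hn j
  have hi := iota_facts hk hn
  unfold colL
  rw [Nat.add_sub_cancel_left]
  rcases hi.2.2.2.2 with a | a <;> rw [a.1] <;> simp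

/-- A letter which is not `A` in row `j + d` was the same in row `j`. -/
theorem col_stay (h : KW n w) (hn : 1 ≤ n) (j m : ℕ) (h2 : m ≤ j + 3 * n) (d : ℕ)
    (h1 : j + d < m) (hne : colL w (j + d) m ≠ A) : colL w j m = colL w (j + d) m := by
  induction d with
  | zero => rfl
  | succ d ih =>
    have hs := col_step h hn (j + d) m (by omega) (by omega)
    rw [show j + (d + 1) = j + d + 1 by omega] at hne ⊢
    split_ifs at hs with hc
    · exact absurd hs hne
    · rw [hs] at hne ⊢
      exact ih (by omega) hne

theorem col_stay' (h : KW n w) (hn : 1 ≤ n) (j j' m : ℕ) (hj : j ≤ j') (h1 : j' < m)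
    (h2 : m ≤ j + 3 * n) (hne : colL w j' m ≠ A) : colL w j m = colL w j' m := by
  obtain ⟨d, rfl⟩ := Nat.exists_eq_add_of_le hj
  exact col_stay h hn j m h2 d h1 hne

/-- A letter which is not `A` in row `0` gets hit later. -/
theorem col_exists (h : KW n w) (hn : 1 ≤ n) (m : ℕ) (h1 : 1 ≤ m) (h2 : m ≤ 3 * n)
    (hne : colL w 0 m ≠ A) :
    ∃ j, j + 1 < m ∧ j + kiota (pro^[j] w) = m ∧ colL w j m = colL w 0 m := by
  by_contra hcon
  push Not at hcon
  have : ∀ j, j < m → colL w j m = colL w 0 m := by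
    intro j
    induction j with
    | zero => intro _; rfl
    | succ j ih =>
      intro hj
      have ih' := ih (by omega)
      rw [col_step h hn j m hj (by omega), if_neg, ih']
      intro hm
      exact hcon j hj hm.symm ih'
  have h3 := this (m - 1) (by omega)
  have h4 := col_first h hn (m - 1)
  rw [show m - 1 + 1 = m by omega] at h4
  exact hne (by rw [← h3, h4])

end Col

/-- If `w_i ∈ {B, C}`, then either `w_{σ_w(i)} = -w_i`, or else `w_{σ_w(i)} = A` and
`w_{σ_w(σ_w(i))} = -w_i`, where `-B = C` and `-C = B` (letters are 1-indexed). -/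
theorem ksigma_of_BC (n : ℕ) (w : List KLetter) (hw : IsKrewerasWord n w)
    (i : ℕ) (hi1 : 1 ≤ i) (hi2 : i ≤ 3 * n)
    (hBC : w.getD (i - 1) KLetter.A = KLetter.B ∨
           w.getD (i - 1) KLetter.A = KLetter.C) :
    w.getD (ksigma n w i - 1) KLetter.A = negL (w.getD (i - 1) KLetter.A) ∨
      (w.getD (ksigma n w i - 1) KLetter.A = KLetter.A ∧
        w.getD (ksigma n w (ksigma n w i) - 1) KLetter.A
          = negL (w.getD (i - 1) KLetter.A)) := by
  have hn : 1 ≤ n := by omega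
  have h : KW n w := (kw_iff n w).1 hw
  have g := gr_of_kw h hn
  have hcol0 : ∀ m, w.getD (m - 1) A = colL w 0 m := by
    intro m; simp [colL]
  have hE : ∀ j, (pro^[j] w).getD (kiota (pro^[j] w) - 1) A = colL w j (j + kiota (pro^[j] w)) := by
    intro j; unfold colL; rw [Nat.add_sub_cancel_left]
  have hlo : ∀ j, 2 ≤ kiota (pro^[j] w) := fun j => (iota_facts (iter_kw h hn j) hn).1
  have hhi : ∀ j, kiota (pro^[j] w) < 3 * n := fun j => (iota_facts (iter_kw h hn j) hn).2.1
  have hper : ∀ j, kiota (pro^[j + 3 * n] w) = kiota (pro^[j] w) := by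
    intro j
    rw [Nat.add_comm, Function.iterate_add_apply]
    exact kiota_period (iter_kw h hn j) hn
  have halt : ∀ j i, i + 1 = j + kiota (pro^[j] w) →
      colL w i (i + kiota (pro^[i] w)) = negL (colL w j (j + kiota (pro^[j] w))) ∧
      i + kiota (pro^[i] w) ≤ j + 3 * n := by
    intro j i hij
    have a := g.alt j
    simp only [hE] at a
    rw [show j + kiota (pro^[j] w) - 1 = i by omega] at a
    refine ⟨?_, a.2⟩
    have c1 := col_hit h hn j
    have c2 := col_hit h hn i
    have a1 := a.1
    revert a1 c1 c2
    generalize colL w i (i + kiota (pro^[i] w)) = u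
    generalize colL w j (j + kiota (pro^[j] w)) = v
    intro c1 c2 a1
    cases u <;> cases v <;> simp_all [negL]
  have hsig : ∀ m, 1 ≤ m → ksigma n w m = (m - 1 + kiota (pro^[m - 1] w) - 1) % (3 * n) + 1 := by
    intro m hm
    unfold ksigma
    rw [show kiota (pro^[m - 1] w) + m - 2 = m - 1 + kiota (pro^[m - 1] w) - 1 by omega]
  simp only [hcol0] at hBC ⊢
  have hne : colL w 0 i ≠ A := by rcases hBC with h1 | h1 <;> rw [h1] <;> simp
  obtain ⟨j, hj1, hj2, hj3⟩ := col_exists h hn i hi1 hi2 hne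
  obtain ⟨al1, al2⟩ := halt j (i - 1) (by omega)
  rw [hj2, hj3] at al1
  have lo := hlo (i - 1)
  have hi := hhi (i - 1)
  have hit := col_hit h hn (i - 1)
  have hs := hsig i hi1
  obtain ⟨k, hk⟩ : ∃ k, k = i - 1 + kiota (pro^[i - 1] w) := ⟨_, rfl⟩
  rw [← hk] at al1 al2 hit hs
  by_cases hkL : k ≤ 3 * n
  · left
    have : ksigma n w i = k := by
      rw [hs, Nat.mod_eq_of_lt (by omega)]; omega
    rw [this, col_stay' h hn 0 (i - 1) k (by omega) (by omega) (by omega) hit, al1]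
  · right
    obtain ⟨k', hk'⟩ : ∃ k', k = k' + 3 * n := ⟨k - 3 * n, by omega⟩
    have hsk : ksigma n w i = k' := by
      rw [hs, show k - 1 = (k' - 1) + 3 * n by omega, Nat.add_mod_right,
        Nat.mod_eq_of_lt (by omega)]
      omega
    have hs' := hsig k' (by omega)
    rw [hsk]
    constructor
    · by_contra hcon
      obtain ⟨j1, hq1, hq2, hq3⟩ := col_exists h hn k' (by omega) (by omega) hcon
      have hh := col_hit h hn (j1 + 3 * n)
      rw [hper, show j1 + 3 * n + kiota (pro^[j1] w) = k by omega] at hh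
      have e1 := col_stay' h hn i (j1 + 3 * n) k (by omega) (by omega) (by omega) hh
      have e2 := col_step h hn (i - 1) k (by omega) (by omega)
      rw [if_pos hk, show i - 1 + 1 = i by omega] at e2
      rw [← e1, e2] at hh
      exact hh rfl
    · obtain ⟨l, hl⟩ : ∃ l, l = k' - 1 + kiota (pro^[k' - 1] w) := ⟨_, rfl⟩
      have b2 := (halt (i - 1) (k - 1) (by omega)).2
      have pp := hper (k' - 1)
      rw [show k' - 1 + 3 * n = k - 1 by omega] at pp
      rw [pp] at b2
      have lo' := hlo (k' - 1)
      have : ksigma n w k' = l := by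
        rw [hs', ← hl, Nat.mod_eq_of_lt (by omega)]; omega
      rw [this]
      have hit' := col_hit h hn (k' - 1)
      have cl := col_last h hn (k' - 1)
      rw [← hl] at hit' cl
      rw [show k' - 1 + 1 = k' by omega, ← hk'] at cl
      rw [col_stay' h hn 0 (k' - 1) l (by omega) (by omega) (by omega) hit', ← cl,
        col_stay' h hn k' (i - 1) k (by omega) (by omega) (by omega) hit, al1]
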